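/- arXiv:2512.08030 — 2 statements merged into one kernel-verified Lean document; each statement's English description precedes it below -/
import Mathlib

section
/- For every integer n ≥ 1 and x ∈ (0,1), 0 ≤ n(√(1-x²) + log(x/(1+√(1-x²)))) - log J_n(n x) ≤ (1/2) log(2πn) + 1/(12n), where J_n is the Bessel function of the first kind of order n. -/
/-!
Write `s = √(1 - x²)` and `ϱ(x) = s + log (x / (1 + s))`.

*Lower bound.* `J_n(z)` is the coefficient of `t^n` in `exp (z (t - 1/t) / 2)`. Cauchy's estimate
on the circle `|t| = r`, `r ≥ 1`, gives `J_n(z) ≤ exp (z (r - 1/r) / 2) / r^n`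
(`besselJ_le_of_radius`); at `z = n x` the radius `r = (1 + s) / x` turns the right-hand side into
`exp (n ϱ(x))`.

*Upper bound.* The function `n ϱ(x) - log J_n(n x)` is nonincreasing on `(0, 1)`, and since
`J_n(z) ~ (z/2)^n / n!` at `0`, it tends to `n - n log n + log n!` there; Robbins' form of
Stirling's formula (`log_factorial_le`) bounds this limit. For the monotonicity put
`f(x) = J_n(n x)` and `E = exp (n ϱ)`, so that `x E' = n s E`. The Bessel equation
`(x d/dx)² f = n² s² f` shows that `E (x f' - n s f)` has derivative `(n x / s) E f`. As long as
`f > 0` this is positive, hence `x f' ≥ n s f`, hence `f / E` is nondecreasing, and therefore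
`f` cannot have a first zero in `(0, 1)`: both the positivity of `f` and the monotonicity of
`f / E` hold on the whole interval. To have functions that are regular at `0`, this is carried
out for `u = G_n(n²x²/4)` with `f = (n x / 2)^n u` and `M = x^(-n) E` instead of `f` and `E`.
-/

/-- The Bessel function of the first kind of integer order `n`,
`J_n(z) = ∑ₖ (-1)^k (z/2)^(n+2k) / (k! (n+k)!)`. -/
noncomputable def besselJ (n : ℕ) (z : ℝ) : ℝ :=
  ∑' k : ℕ, (-1) ^ k * (z / 2) ^ (n + 2 * k) /
    ((Nat.factorial k : ℝ) * (Nat.factorial (n + k) : ℝ))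

/-! ### The upper bound for `J_n` from the generating function -/

/-- Expansion of the factor `exp (-a / t)` in powers of `1 / t` under the integral sign; it
converges uniformly on the circle. -/
theorem circle_hasSum (n : ℕ) (a r : ℝ) (hr : 0 < r) :
    HasSum (fun k : ℕ => ∮ t in C(0, r),
        ((-a : ℂ) ^ k / (k.factorial : ℂ)) * ((1 / t ^ (n + k + 1)) * Complex.exp (a * t)))
      (∮ t in C(0, r), (1 / t ^ (n + 1)) * Complex.exp (a * t - a / t)) := by
  have hne : ∀ θ, circleMap 0 r θ ≠ 0 := fun θ => circleMap_ne_center hr.ne'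
  have hcE : Continuous fun θ : ℝ => Complex.exp (a * circleMap 0 r θ) := by fun_prop
  have hcd : Continuous fun θ : ℝ => deriv (circleMap 0 r) θ := by
    rw [funext (deriv_circleMap 0 r)]
    fun_prop
  unfold circleIntegral
  refine intervalIntegral.hasSum_integral_of_dominated_convergence
    (fun k _ => (|a| / r) ^ k / k.factorial * (r * (1 / r ^ (n + 1) * Real.exp (|a| * r))))
    (fun k => ?_) (fun k => ?_) ?_ ?_ ?_
  · refine Continuous.aestronglyMeasurable ?_
    refine Continuous.smul hcd ?_
    refine continuous_const.mul (Continuous.mul ?_ hcE)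
    exact continuous_const.div (by fun_prop) (fun θ => pow_ne_zero _ (hne θ))
  · refine Filter.Eventually.of_forall fun θ _ => ?_
    have h1 : ‖Complex.exp (a * circleMap 0 r θ)‖ ≤ Real.exp (|a| * r) := by
      refine (Complex.norm_exp_le_exp_norm _).trans (Real.exp_le_exp.2 ?_)
      simp [abs_of_pos hr]
    have h2 : ‖deriv (circleMap 0 r) θ • ((-a : ℂ) ^ k / (k.factorial : ℂ) *
          (1 / circleMap 0 r θ ^ (n + k + 1) * Complex.exp (a * circleMap 0 r θ)))‖ =
        (|a| / r) ^ k / k.factorial * (r * (1 / r ^ (n + 1) *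
          ‖Complex.exp (a * circleMap 0 r θ)‖)) := by
      simp only [norm_smul, norm_mul, norm_div, norm_pow, norm_neg, Complex.norm_real,
        Real.norm_eq_abs, Complex.norm_natCast, norm_one, norm_circleMap_zero, deriv_circleMap,
        Complex.norm_I, abs_of_pos hr, mul_one, div_pow]
      field_simp
      ring
    rw [h2]
    gcongr
  · refine Filter.Eventually.of_forall fun θ _ => ?_
    exact (Real.summable_pow_div_factorial _).mul_right _
  · exact intervalIntegrable_const
  · refine Filter.Eventually.of_forall fun θ _ => ?_
    have h := (NormedSpace.expSeries_div_hasSum_exp (-a / circleMap 0 r θ : ℂ)).mul_left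
      (deriv (circleMap 0 r) θ * (1 / circleMap 0 r θ ^ (n + 1) *
        Complex.exp (a * circleMap 0 r θ)))
    rw [← Complex.exp_eq_exp_ℂ] at h
    convert! h using 1
    · funext k
      have := hne θ
      simp only [smul_eq_mul, div_pow]
      field_simp
      ring
    · dsimp only
      rw [smul_eq_mul, mul_assoc, mul_assoc, ← Complex.exp_add]
      congr 4
      ring

theorem circle_term (m : ℕ) (a r : ℝ) (hr : 0 < r) :
    (∮ t in C(0, r), (1 / t ^ (m + 1)) * Complex.exp (a * t))
      = 2 * Real.pi * Complex.I * ((a : ℂ) ^ m / m.factorial) := by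
  have h := DifferentiableOn.circleIntegral_one_div_sub_center_pow_smul (R := r) (c := 0)
    (f := fun t : ℂ => Complex.exp (a * t)) hr m (by fun_prop)
  simp only [sub_zero, smul_eq_mul, iteratedDeriv_cexp_const_mul, mul_zero, Complex.exp_zero] at h
  rw [h]
  ring

/-- Schläfli's integral, with the circle of integration of arbitrary radius. -/
theorem two_pi_I_mul_besselJ (n : ℕ) (z r : ℝ) (hr : 0 < r) :
    2 * Real.pi * Complex.I * (besselJ n z : ℂ) =
      ∮ t in C(0, r), (1 / t ^ (n + 1)) *
        Complex.exp ((z / 2 : ℝ) * t - (z / 2 : ℝ) / t) := by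
  rw [← (circle_hasSum n (z / 2) r hr).tsum_eq, besselJ, Complex.ofReal_tsum, ← tsum_mul_left]
  refine tsum_congr fun k => ?_
  have h := circleIntegral.integral_const_mul (((-(z / 2 : ℝ)) : ℂ) ^ k / (k.factorial : ℂ))
    (fun t => (1 / t ^ (n + k + 1)) * Complex.exp ((z / 2 : ℝ) * t)) 0 r
  rw [h, circle_term _ _ _ hr]
  push_cast
  have e : (-((z : ℂ) / 2)) ^ k = (-1) ^ k * (z / 2 : ℂ) ^ k := neg_pow _ _
  rw [e]
  field_simp
  ring

/-- Cauchy's estimate for the coefficients of the generating function of the Bessel functions. -/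
theorem besselJ_le_of_radius (n : ℕ) (z r : ℝ) (hz : 0 ≤ z) (hr : 1 ≤ r) :
    besselJ n z ≤ Real.exp (z / 2 * (r - 1 / r)) / r ^ n := by
  have hr0 : 0 < r := by linarith
  have hb : ∀ t ∈ Metric.sphere (0 : ℂ) r,
      ‖(1 / t ^ (n + 1)) * Complex.exp ((z / 2 : ℝ) * t - (z / 2 : ℝ) / t)‖ ≤
        1 / r ^ (n + 1) * Real.exp (z / 2 * (r - 1 / r)) := by
    intro t ht
    have ht' : ‖t‖ = r := by simpa using ht
    rw [norm_mul, norm_div, norm_one, norm_pow, ht', Complex.norm_exp]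
    have hre : t.re ≤ r := ht' ▸ Complex.re_le_norm t
    have e : ((z / 2 : ℝ) * t - (z / 2 : ℝ) / t).re = z / 2 * (t.re * (1 - 1 / r ^ 2)) := by
      have hsq : Complex.normSq t = r ^ 2 := by rw [Complex.normSq_eq_norm_sq, ht']
      rw [Complex.sub_re, Complex.re_ofReal_mul, div_eq_mul_inv _ t, Complex.re_ofReal_mul,
        Complex.inv_re, hsq]
      ring
    have h1 : 0 ≤ 1 - 1 / r ^ 2 := by
      rw [sub_nonneg, div_le_one (by positivity)]
      exact one_le_pow₀ hr
    have e2 : r - 1 / r = r * (1 - 1 / r ^ 2) := by field_simp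
    rw [e, e2]
    gcongr
  have h := circleIntegral.norm_integral_le_of_norm_le_const hr0.le hb
  rw [← two_pi_I_mul_besselJ n z r hr0] at h
  simp only [norm_mul, Complex.norm_I, Complex.norm_real, Real.norm_eq_abs, Complex.norm_ofNat,
    abs_of_pos Real.pi_pos, mul_one] at h
  have h3 : 2 * Real.pi * |besselJ n z| ≤
      2 * Real.pi * (Real.exp (z / 2 * (r - 1 / r)) / r ^ n) := by
    refine h.trans (le_of_eq ?_)
    field_simp
    ring
  exact (le_abs_self _).trans (le_of_mul_le_mul_left h3 (by positivity))

/-! ### Robbins' upper bound for the factorial -/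

/-- Robbins' bound: the step estimate `log_stirlingSeq_sdiff_le` telescopes, so that
`log (stirlingSeq m) - 1 / (12 m)` increases to its limit `log √π`. -/
theorem log_factorial_le (n : ℕ) (hn : 1 ≤ n) :
    Real.log n.factorial ≤
      n * Real.log n - n + 1 / 2 * Real.log (2 * Real.pi * n) + 1 / (12 * n) := by
  have hmono : Monotone fun m : ℕ =>
      Real.log (Stirling.stirlingSeq (m + 1)) - 1 / (12 * ((m + 1 : ℕ) : ℝ)) := by
    refine monotone_nat_of_le_succ fun m => ?_
    have h := Stirling.log_stirlingSeq_sdiff_le (m + 1)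
    have e : 1 / (12 * ((m + 1 : ℕ) : ℝ) * (((m + 1 : ℕ) : ℝ) + 1)) =
        1 / (12 * ((m + 1 : ℕ) : ℝ)) - 1 / (12 * ((m + 1 + 1 : ℕ) : ℝ)) := by
      push_cast
      field_simp
      ring
    linarith
  have hlim : Filter.Tendsto (fun m : ℕ =>
      Real.log (Stirling.stirlingSeq (m + 1)) - 1 / (12 * ((m + 1 : ℕ) : ℝ))) Filter.atTop
      (nhds (Real.log √Real.pi - 0)) := by
    refine Filter.Tendsto.sub ?_ ?_
    · exact ((Filter.tendsto_add_atTop_iff_nat 1).2 Stirling.tendsto_stirlingSeq_sqrt_pi).log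
        (by positivity)
    · refine Filter.Tendsto.div_atTop tendsto_const_nhds ?_
      exact Filter.Tendsto.const_mul_atTop (by norm_num)
        (tendsto_natCast_atTop_atTop.comp (Filter.tendsto_add_atTop_nat 1))
  have h := hmono.ge_of_tendsto hlim (n - 1)
  have hn0 : (0 : ℝ) < n := by exact_mod_cast hn
  simp only [Nat.sub_add_cancel hn] at h
  rw [Stirling.log_stirlingSeq_formula, Real.log_div hn0.ne' (Real.exp_pos 1).ne', Real.log_exp,
    Real.log_sqrt Real.pi_pos.le] at h
  have e : Real.log (2 * Real.pi * n) = Real.log (2 * n) + Real.log Real.pi := by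
    rw [← Real.log_mul (by positivity) (by positivity)]
    congr 1
    ring
  rw [e]
  linarith

/-! ### The power series without its leading power -/

/-- The entire function `G_m(t) = ∑ₖ (-t)^k / (k! (m+k)!)`, which is `J_m` without its
leading power: `J_m(z) = (z/2)^m G_m(z²/4)`. -/
noncomputable def besselG (m : ℕ) (t : ℝ) : ℝ :=
  ∑' k : ℕ, (-t) ^ k / ((k.factorial : ℝ) * ((m + k).factorial : ℝ))

theorem besselG_summable (m : ℕ) (t : ℝ) :
    Summable fun k : ℕ => (-t) ^ k / ((k.factorial : ℝ) * ((m + k).factorial : ℝ)) := by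
  refine Summable.of_norm_bounded (Real.summable_pow_div_factorial |t|) fun k => ?_
  have h1 : (1 : ℝ) ≤ ((m + k).factorial : ℝ) := by exact_mod_cast Nat.factorial_pos _
  rw [norm_div, norm_pow, norm_neg, norm_mul, Real.norm_natCast, Real.norm_natCast,
    Real.norm_eq_abs]
  gcongr
  exact le_mul_of_one_le_right (by positivity) h1

theorem besselG_zero (m : ℕ) : besselG m 0 = 1 / m.factorial := by
  rw [besselG, tsum_eq_single 0 (fun k hk => by simp [hk])]
  simp

theorem besselJ_eq (n : ℕ) (z : ℝ) : besselJ n z = (z / 2) ^ n * besselG n (z ^ 2 / 4) := by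
  rw [besselJ, besselG, ← tsum_mul_left]
  refine tsum_congr fun k => ?_
  rw [neg_pow (z ^ 2 / 4), show z ^ 2 / 4 = (z / 2) ^ 2 by ring, pow_add, pow_mul]
  ring

/-- The three-term recurrence; as `G_m` has derivative `-G_(m+1)`, it is the Bessel equation
written for `G_m`. -/
theorem besselG_recurrence (m : ℕ) (t : ℝ) :
    besselG m t = (m + 1) * besselG (m + 1) t - t * besselG (m + 2) t := by
  have h2 : HasSum (fun k : ℕ => (k : ℝ) * ((-t) ^ k /
      ((k.factorial : ℝ) * ((m + 1 + k).factorial : ℝ)))) (-t * besselG (m + 2) t) := by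
    rw [← hasSum_nat_add_iff' 1]
    simp only [Finset.range_one, Finset.sum_singleton, Nat.cast_zero, zero_mul, sub_zero]
    convert! (besselG_summable (m + 2) t).hasSum.mul_left (-t) using 1
    funext k
    rw [show m + 1 + (k + 1) = m + 2 + k by ring, Nat.factorial_succ k]
    push_cast
    field_simp
    ring
  have h1 := ((besselG_summable (m + 1) t).hasSum.mul_left ((m : ℝ) + 1)).add h2
  rw [← besselG] at h1
  have h3 : besselG m t = (m + 1) * besselG (m + 1) t + -t * besselG (m + 2) t := by
    rw [← h1.tsum_eq, besselG]
    refine tsum_congr fun k => ?_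
    rw [show m + 1 + k = (m + k) + 1 by ring, Nat.factorial_succ (m + k)]
    push_cast
    field_simp
    ring
  rw [h3]
  ring

theorem besselG_hasDerivAt (m : ℕ) (t : ℝ) :
    HasDerivAt (besselG m) (-besselG (m + 1) t) t := by
  set R := |t| + 1 with hR
  have hR0 : 0 < R := by positivity
  have hs : Summable fun k : ℕ => (k : ℝ) * R ^ (k - 1) / k.factorial := by
    rw [← summable_nat_add_iff 1]
    refine (Real.summable_pow_div_factorial R).congr fun k => ?_
    rw [Nat.factorial_succ k]
    push_cast
    field_simp
  have h := hasDerivAt_tsum_of_isPreconnected (𝕜 := ℝ) (t := Metric.ball (0 : ℝ) R)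
    (g := fun (k : ℕ) (y : ℝ) => (-y) ^ k / ((k.factorial : ℝ) * ((m + k).factorial : ℝ)))
    (g' := fun (k : ℕ) (y : ℝ) => (k : ℝ) * (-y) ^ (k - 1) * (-1) /
      ((k.factorial : ℝ) * ((m + k).factorial : ℝ)))
    (y₀ := 0) (y := t) hs Metric.isOpen_ball (convex_ball _ _).isPreconnected ?_ ?_ ?_ ?_ ?_
  · convert! h using 1
    rw [besselG, ← tsum_neg]
    symm
    rw [Summable.tsum_eq_zero_add]
    · simp only [Nat.cast_zero, zero_mul, zero_div, zero_add]
      refine tsum_congr fun k => ?_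
      rw [show m + (k + 1) = m + 1 + k by ring, Nat.factorial_succ k]
      push_cast
      field_simp
    · rw [← summable_nat_add_iff 1]
      refine (besselG_summable (m + 1) t).neg.congr fun k => ?_
      rw [show m + (k + 1) = m + 1 + k by ring, Nat.factorial_succ k]
      push_cast
      field_simp
  · intro k y _
    exact (((hasDerivAt_id y).neg).pow k).div_const _
  · intro k y hy
    have hy' : |y| ≤ R := by simpa using (Metric.mem_ball.1 hy).le
    have h1 : (1 : ℝ) ≤ ((m + k).factorial : ℝ) := by exact_mod_cast Nat.factorial_pos _
    simp only [norm_div, norm_mul, norm_pow, norm_neg, Real.norm_natCast, norm_one, mul_one]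
    rw [Real.norm_eq_abs]
    gcongr
    exact le_mul_of_one_le_right (by positivity) h1
  · simpa using hR0
  · exact besselG_summable m 0
  · simp [hR]

theorem besselG_comp_hasDerivAt (m : ℕ) (c x : ℝ) :
    HasDerivAt (fun y => besselG m (c ^ 2 * y ^ 2 / 4))
      (-(c ^ 2 * x / 2) * besselG (m + 1) (c ^ 2 * x ^ 2 / 4)) x := by
  have h1 : HasDerivAt (fun y : ℝ => c ^ 2 * y ^ 2 / 4) (c ^ 2 * x / 2) x := by
    refine ((((hasDerivAt_id x).pow 2).const_mul (c ^ 2)).div_const 4).congr_deriv ?_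
    simp
    ring
  exact ((besselG_hasDerivAt m _).comp x h1).congr_deriv (by ring)

theorem sqrt_hasDerivAt {x : ℝ} (hx : x ^ 2 < 1) :
    HasDerivAt (fun y : ℝ => √(1 - y ^ 2)) (-x / √(1 - x ^ 2)) x := by
  refine ((((hasDerivAt_id x).pow 2).const_sub 1).sqrt (by simp; linarith)).congr_deriv ?_
  simp
  ring

/-! ### Comparison of logarithmic derivatives -/

/-- The quantity `φ(x) = n (1 - s) u + x u'`, with `s = √(1 - x²)` and `u(x) = G_n(n²x²/4)`.
In terms of `f(x) = J_n(nx) = (nx/2)^n u(x)` it is `(x f' - n s f) / (nx/2)^n`, so its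
sign compares the logarithmic derivatives of `J_n(nx)` and of `exp (n ϱ(x))`. -/
noncomputable def phi (n : ℕ) (x : ℝ) : ℝ :=
  n * (1 - √(1 - x ^ 2)) * besselG n ((n : ℝ) ^ 2 * x ^ 2 / 4) -
    (n : ℝ) ^ 2 * x ^ 2 / 2 * besselG (n + 1) ((n : ℝ) ^ 2 * x ^ 2 / 4)

/-- The weight `M = exp (c s) / (1 + s)^c`, with `s = √(1 - x²)`, satisfies
`M' = - (c x / (1 + s)) M`. For `c = n`, the product `x^n M` is `exp (n ϱ(x))`; the case `c = -n`
gives `1 / M`. -/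
theorem weight_hasDerivAt (c : ℝ) {x : ℝ} (hx : x ^ 2 < 1) :
    HasDerivAt (fun y : ℝ => Real.exp (c * (√(1 - y ^ 2) - Real.log (1 + √(1 - y ^ 2)))))
      (-(c * x / (1 + √(1 - x ^ 2))) *
        Real.exp (c * (√(1 - x ^ 2) - Real.log (1 + √(1 - x ^ 2))))) x := by
  have hs := sqrt_hasDerivAt hx
  have hs0 : 0 < √(1 - x ^ 2) := Real.sqrt_pos.2 (by linarith)
  have h1 : 1 + √(1 - x ^ 2) ≠ 0 := by positivity
  refine (((hs.sub ((hs.const_add 1).log h1)).const_mul c).exp).congr_deriv ?_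
  simp only [Pi.sub_apply]
  field_simp
  ring

/-- The Bessel equation with the integrating factor of `φ`: for `Ψ = x^(2n) M φ`, the derivative
of `Ψ` is `x^(2n) M · (n x / s) u`, a positive multiple of `u`. -/
theorem psi_hasDerivAt (n : ℕ) (hn : 1 ≤ n) {x : ℝ} (hx0 : 0 < x) (hx1 : x < 1) :
    HasDerivAt (fun y : ℝ => y ^ (2 * n) *
        Real.exp (n * (√(1 - y ^ 2) - Real.log (1 + √(1 - y ^ 2)))) * phi n y)
      (x ^ (2 * n) * Real.exp (n * (√(1 - x ^ 2) - Real.log (1 + √(1 - x ^ 2)))) *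
        (n * x / √(1 - x ^ 2) * besselG n ((n : ℝ) ^ 2 * x ^ 2 / 4))) x := by
  have hx : x ^ 2 < 1 := by nlinarith
  have hs := sqrt_hasDerivAt hx
  have hs0 : 0 < √(1 - x ^ 2) := Real.sqrt_pos.2 (by linarith)
  have hss : √(1 - x ^ 2) ^ 2 = 1 - x ^ 2 := Real.sq_sqrt (by linarith)
  have hw := weight_hasDerivAt (n : ℝ) hx
  have hu := besselG_comp_hasDerivAt n (n : ℝ) x
  have hv := besselG_comp_hasDerivAt (n + 1) (n : ℝ) x
  have hrec := besselG_recurrence n ((n : ℝ) ^ 2 * x ^ 2 / 4)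
  have hq : HasDerivAt (fun y : ℝ => (n : ℝ) ^ 2 * y ^ 2 / 2) ((n : ℝ) ^ 2 * x) x := by
    refine ((((hasDerivAt_id x).pow 2).const_mul ((n : ℝ) ^ 2)).div_const 2).congr_deriv ?_
    simp
    ring
  have hphi := (((hs.const_sub 1).const_mul (n : ℝ)).mul hu).sub (hq.mul hv)
  have hp : HasDerivAt (fun y : ℝ => y ^ (2 * n)) (2 * n * x ^ (2 * n) / x) x := by
    refine (hasDerivAt_pow (2 * n) x).congr_deriv ?_
    obtain ⟨k, rfl⟩ : ∃ k, n = k + 1 := ⟨n - 1, by omega⟩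
    rw [show 2 * (k + 1) - 1 = 2 * k + 1 by omega]
    field_simp
    push_cast
    ring
  refine ((hp.mul hw).mul hphi).congr_deriv ?_
  simp only [Pi.mul_apply, Pi.sub_apply]
  clear hs hw hu hv hphi hp hq
  generalize Real.exp (n * (√(1 - x ^ 2) - Real.log (1 + √(1 - x ^ 2)))) = E
  generalize √(1 - x ^ 2) = s at *
  change besselG n _ = _ - _ * besselG (n + 1 + 1) _ at hrec
  generalize besselG n ((n : ℝ) ^ 2 * x ^ 2 / 4) = u at *
  generalize besselG (n + 1) ((n : ℝ) ^ 2 * x ^ 2 / 4) = v at *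
  generalize besselG (n + 1 + 1) ((n : ℝ) ^ 2 * x ^ 2 / 4) = w at *
  generalize x ^ (2 * n) = P
  have hp1 : x / (1 + s) = (1 - s) / x := by
    rw [div_eq_div_iff (by positivity) hx0.ne']
    linarith
  rw [mul_div_assoc (n : ℝ) x (1 + s), hp1]
  field_simp
  linear_combination P * E * n * s * (-4 * u * hss + 4 * x ^ 2 * hrec)

/-- The function `Ψ = x^(2n) M φ` vanishes at `0` and is nondecreasing as long as `u ≥ 0`. -/
theorem phi_nonneg (n : ℕ) (hn : 1 ≤ n) {b : ℝ} (hb0 : 0 < b) (hb1 : b < 1)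
    (hu : ∀ y ∈ Set.Ioo 0 b, 0 ≤ besselG n ((n : ℝ) ^ 2 * y ^ 2 / 4)) :
    ∀ y ∈ Set.Ioo 0 b, 0 ≤ phi n y := by
  intro y hy
  have hG : ∀ m, Continuous (besselG m) := fun m =>
    continuous_iff_continuousAt.2 fun t => (besselG_hasDerivAt m t).continuousAt
  have hc : Continuous (fun y : ℝ => y ^ (2 * n) *
        Real.exp (n * (√(1 - y ^ 2) - Real.log (1 + √(1 - y ^ 2)))) * phi n y) := by
    have h0 : ∀ y : ℝ, 1 + √(1 - y ^ 2) ≠ 0 := fun y => by positivity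
    have h1 := hG n
    have h2 := hG (n + 1)
    have h3 : Continuous fun y : ℝ => Real.log (1 + √(1 - y ^ 2)) :=
      Continuous.log (by fun_prop) h0
    unfold phi
    fun_prop
  have hm := monotoneOn_of_hasDerivWithinAt_nonneg (convex_Icc 0 b) hc.continuousOn
    (fun x hx => (psi_hasDerivAt n hn (interior_Icc (a := (0 : ℝ)) (b := b) ▸ hx).1
      ((interior_Icc (a := (0 : ℝ)) (b := b) ▸ hx).2.trans hb1)).hasDerivWithinAt)
    (fun x hx => by
      rw [interior_Icc] at hx
      have := hu x hx
      have := hx.1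
      positivity)
  have h := hm (Set.left_mem_Icc.2 hb0.le) (Set.Ioo_subset_Icc_self hy) hy.1.le
  have hy0 := hy.1
  have hz : (0 : ℝ) ^ (2 * n) = 0 := zero_pow (by omega)
  simp only [hz, zero_mul] at h
  exact nonneg_of_mul_nonneg_right h (by positivity)

/-- Comparison of the values of `u / M` at `0` and at `b`: this function is nondecreasing as long
as `u ≥ 0`, because its derivative is `φ / (x M)`. -/
theorem ratio_mono (n : ℕ) (hn : 1 ≤ n) {b : ℝ} (hb0 : 0 < b) (hb1 : b < 1)
    (hu : ∀ y ∈ Set.Ioo 0 b, 0 ≤ besselG n ((n : ℝ) ^ 2 * y ^ 2 / 4)) :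
    Real.exp (-n * (1 - Real.log 2)) / n.factorial ≤
      Real.exp (-n * (√(1 - b ^ 2) - Real.log (1 + √(1 - b ^ 2)))) *
        besselG n ((n : ℝ) ^ 2 * b ^ 2 / 4) := by
  have hd : ∀ x : ℝ, x ^ 2 < 1 → HasDerivAt (fun y : ℝ =>
      Real.exp (-n * (√(1 - y ^ 2) - Real.log (1 + √(1 - y ^ 2)))) *
        besselG n ((n : ℝ) ^ 2 * y ^ 2 / 4)) _ x := fun x hx =>
    (weight_hasDerivAt (-n : ℝ) hx).mul (besselG_comp_hasDerivAt n (n : ℝ) x)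
  have hsq : ∀ x ∈ Set.Icc 0 b, x ^ 2 < 1 := fun x hx => by nlinarith [hx.1, hx.2]
  have hm := monotoneOn_of_hasDerivWithinAt_nonneg (convex_Icc 0 b)
    (fun x hx => (hd x (hsq x hx)).continuousAt.continuousWithinAt)
    (fun x hx => (hd x (hsq x (interior_subset hx))).hasDerivWithinAt)
    (fun x hx => by
      have hx1 := hsq x (interior_subset hx)
      rw [interior_Icc] at hx
      have hp := phi_nonneg n hn hb0 hb1 hu x hx
      have hx0 := hx.1
      have hss : √(1 - x ^ 2) ^ 2 = 1 - x ^ 2 := Real.sq_sqrt (by linarith)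
      have hs0 : 0 ≤ √(1 - x ^ 2) := Real.sqrt_nonneg _
      unfold phi at hp
      have hE := Real.exp_pos (-n * (√(1 - x ^ 2) - Real.log (1 + √(1 - x ^ 2))))
      have hp1 : x / (1 + √(1 - x ^ 2)) = (1 - √(1 - x ^ 2)) / x := by
        rw [div_eq_div_iff (by positivity) hx0.ne']
        linarith
      refine (div_nonneg (mul_nonneg hE.le hp) hx0.le).trans_eq ?_
      rw [mul_div_assoc (-n : ℝ) x, hp1]
      field_simp
      ring)
  have h := hm (Set.left_mem_Icc.2 hb0.le) (Set.right_mem_Icc.2 hb0.le) hb0.le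
  simp only [ne_eq, OfNat.ofNat_ne_zero, not_false_eq_true, zero_pow, sub_zero, Real.sqrt_one,
    mul_zero, zero_div, besselG_zero, one_add_one_eq_two, mul_one_div] at h
  exact h

/-- Positivity of `u` on `(0, 1)`: by `ratio_mono`, `u` cannot reach a first zero. -/
theorem besselG_pos (n : ℕ) (hn : 1 ≤ n) {x : ℝ} (hx0 : 0 < x) (hx1 : x < 1) :
    0 < besselG n ((n : ℝ) ^ 2 * x ^ 2 / 4) := by
  by_contra hneg
  have hc : Continuous fun y => besselG n ((n : ℝ) ^ 2 * y ^ 2 / 4) :=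
    continuous_iff_continuousAt.2 fun y => (besselG_comp_hasDerivAt n n y).continuousAt
  -- The least point of `[0, x]` where `u ≤ 0`; it is positive since `u(0) = 1 / n!`.
  obtain ⟨b, ⟨hbI, hbu⟩, hmin⟩ :=
    (isCompact_Icc.inter_right (isClosed_le hc continuous_const) :
      IsCompact (Set.Icc 0 x ∩ {y | besselG n ((n : ℝ) ^ 2 * y ^ 2 / 4) ≤ 0})).exists_isLeast
      ⟨x, ⟨hx0.le, le_rfl⟩, not_lt.1 hneg⟩
  simp only [Set.mem_ofPred_eq] at hbu
  have hb0 : 0 < b := by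
    rcases hbI.1.eq_or_lt with h | h
    · subst h
      simp only [ne_eq, OfNat.ofNat_ne_zero, not_false_eq_true, zero_pow, mul_zero, zero_div,
        besselG_zero] at hbu
      exact absurd hbu (not_le.2 (by positivity))
    · exact h
  have h := ratio_mono n hn hb0 (hbI.2.trans_lt hx1) fun y hy => by
    by_contra hy'
    exact (hmin ⟨⟨hy.1.le, hy.2.le.trans hbI.2⟩, (not_le.1 hy').le⟩).not_gt hy.2
  have h1 : (0 : ℝ) < Real.exp (-n * (1 - Real.log 2)) / n.factorial := by positivity
  exact absurd (pos_of_mul_pos_right (h1.trans_le h) (Real.exp_pos _).le) (not_lt.2 hbu)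

theorem besselJ_debye_bounds (n : ℕ) (hn : 1 ≤ n) (x : ℝ) (hx : x ∈ Set.Ioo (0:ℝ) 1) :
    0 ≤ (n : ℝ) * (Real.sqrt (1 - x ^ 2) + Real.log (x / (1 + Real.sqrt (1 - x ^ 2))))
        - Real.log (besselJ n ((n : ℝ) * x)) ∧
    (n : ℝ) * (Real.sqrt (1 - x ^ 2) + Real.log (x / (1 + Real.sqrt (1 - x ^ 2))))
        - Real.log (besselJ n ((n : ℝ) * x))
      ≤ (1 / 2) * Real.log (2 * Real.pi * n) + 1 / (12 * (n : ℝ)) := by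
  obtain ⟨hx0, hx1⟩ := hx
  have hn0 : (0 : ℝ) < n := by exact_mod_cast hn
  have hG := besselG_pos n hn hx0 hx1
  have hJ : besselJ n (n * x) = (n * x / 2) ^ n * besselG n ((n : ℝ) ^ 2 * x ^ 2 / 4) := by
    rw [besselJ_eq, mul_pow]
  have hJ0 : 0 < besselJ n (n * x) := by rw [hJ]; positivity
  have hs0 : 0 ≤ √(1 - x ^ 2) := Real.sqrt_nonneg _
  have hss : √(1 - x ^ 2) ^ 2 = 1 - x ^ 2 := Real.sq_sqrt (by nlinarith)
  constructor
  -- The radius `(1 + s) / x` minimises the bound of Cauchy's estimate.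
  · have h := besselJ_le_of_radius n (n * x) ((1 + √(1 - x ^ 2)) / x) (by positivity)
      (by rw [one_le_div hx0]; linarith)
    have h2 := Real.log_le_log hJ0 h
    have e : n * x / 2 * ((1 + √(1 - x ^ 2)) / x - 1 / ((1 + √(1 - x ^ 2)) / x)) =
        n * √(1 - x ^ 2) := by
      field_simp
      linear_combination -hss
    rw [e, Real.log_div (by positivity) (by positivity), Real.log_exp, Real.log_pow,
      Real.log_div (by positivity) hx0.ne'] at h2
    rw [Real.log_div hx0.ne' (by positivity)]
    linarith
  · have h := ratio_mono n hn hx0 hx1 fun y hy => (besselG_pos n hn hy.1 (hy.2.trans hx1)).le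
    have h2 := Real.log_le_log (by positivity) h
    rw [Real.log_div (by positivity) (by positivity), Real.log_mul (by positivity) hG.ne',
      Real.log_exp, Real.log_exp] at h2
    have h3 := log_factorial_le n hn
    rw [hJ, Real.log_mul (by positivity) hG.ne', Real.log_pow, Real.log_div (by positivity)
      two_ne_zero, Real.log_mul hn0.ne' hx0.ne', Real.log_div hx0.ne' (by positivity)]
    linarith
end

section
/- For every integer n ≥ 1 and real x > 0, the quantity log I_n(n x) - n(√(1+x²) + log(x/(1+√(1+x²)))) + (1/4) log(1 + 1/n + x²) + (1/2) log(2πn) lies in the open interval (0, 1/(6n)), where I_n is the modified Bessel function of the first kind of order n. -/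
/-!
Put `t = n x`, `s = √(n² + t²)` and `q = n² + n + t²`. The quantity in the theorem is
`superGap n t = log I_n(t) - log E(t) + log(2π) / 2`, where `E(t) = tⁿ exp (superPsi n t)`.

The logarithmic derivative `u = t I_n' / I_n` solves the Riccati equation `t u' + u² = t² + n²`, and
`G = t E' / E = s - t² / (2q)` is a strict supersolution of it (`superV_riccati`). Since `u` and `G`
agree at `t = 0`, it follows that `u < G` for `t > 0` (`log_deriv_compare`), so `superGap n` is
strictly decreasing on `[0, ∞)`.

* Upper bound: `superGap n t < superGap n 0 = log(1 + 1/n) / 4 - r_n`, with `r_n` the remainder in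
  Stirling's formula. This is at most `1 / (6n)`, because `r_n ≥ 1 / (12(n+1))` and
  `log(1 + 1/n) ≤ (1/n + 1/(n+1)) / 2`.
* Lower bound: `superGap n` has a nonnegative limit at infinity. The constant in the large-argument
  asymptotics of `I_n` is obtained from Stirling's formula rather than from an integral
  representation. For `N ≥ 2` the function `s - t² / (2s²) - t² / s³` of order `N` is a subsolution
  (`subV_riccati`), so the gap `subGap N` is increasing, starting from `subGap N 0 = -r_N - 1/N`.
  As `I_N ≤ I_n` for `N ≥ n` (again by comparison), and as the two gaps subtract the same leading
  asymptotics `t - log t / 2` up to `o(1)`, the values of `superGap n` are at least `-r_N - 1/N`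
  for all large `N`, and this tends to `0`.

Everything is carried out for the entire function `besselF n`, where
`I_n(t) = (t/2)ⁿ besselF n (t²/4)`, and for `v = G - n`, which removes the singularity at `t = 0`.
-/

/-- The modified Bessel function of the first kind of integer order `n`,
`I_n(z) = ∑ₖ (z/2)^(n+2k) / (k! (n+k)!)`. -/
noncomputable def besselI (n : ℕ) (z : ℝ) : ℝ :=
  ∑' k : ℕ, (z / 2) ^ (n + 2 * k) /
    ((Nat.factorial k : ℝ) * (Nat.factorial (n + k) : ℝ))

open Filter Topology

/-! ### The entire function underlying `I_n` -/

/-- The entire function `∑ₖ y^k / (k! (n+k)!)`, so that `I_n(z) = (z/2)^n besselF n (z²/4)`. -/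
noncomputable def besselF (n : ℕ) (y : ℝ) : ℝ :=
  ∑' k : ℕ, y ^ k / ((Nat.factorial k : ℝ) * (Nat.factorial (n + k) : ℝ))

lemma besselF_term_le (n k : ℕ) {y : ℝ} (hy : 0 ≤ y) :
    y ^ k / ((Nat.factorial k : ℝ) * (Nat.factorial (n + k) : ℝ)) ≤
      y ^ k / (Nat.factorial k : ℝ) := by
  have h1 : (1 : ℝ) ≤ (Nat.factorial (n + k) : ℝ) := by
    exact_mod_cast Nat.factorial_pos (n + k)
  have h2 : (0 : ℝ) < (Nat.factorial k : ℝ) := by positivity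
  gcongr
  nlinarith

lemma besselF_summable (n : ℕ) (y : ℝ) :
    Summable fun k : ℕ => y ^ k / ((Nat.factorial k : ℝ) * (Nat.factorial (n + k) : ℝ)) := by
  refine Summable.of_norm_bounded (Real.summable_pow_div_factorial |y|) fun k => ?_
  rw [norm_div, norm_pow, Real.norm_eq_abs, Real.norm_of_nonneg (by positivity)]
  exact besselF_term_le n k (abs_nonneg y)

lemma besselF_pos (n : ℕ) {y : ℝ} (hy : 0 ≤ y) : 0 < besselF n y :=
  (besselF_summable n y).tsum_pos (fun k => by positivity) 0 (by positivity)

lemma besselF_zero (n : ℕ) : besselF n 0 = 1 / (Nat.factorial n : ℝ) := by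
  unfold besselF
  rw [tsum_eq_single 0 (fun k hk => by simp [hk])]
  simp

lemma besselF_hasDerivAt (n : ℕ) (y : ℝ) :
    HasDerivAt (besselF n) (besselF (n + 1) y) y := by
  set R := |y| + 1
  set g' : ℕ → ℝ → ℝ := fun k z =>
    ((k : ℝ) * z ^ (k - 1)) / ((Nat.factorial k : ℝ) * (Nat.factorial (n + k) : ℝ)) with hg'
  set u : ℕ → ℝ := fun k =>
    ((k : ℝ) * R ^ (k - 1)) / ((Nat.factorial k : ℝ) * (Nat.factorial (n + k) : ℝ)) with hu
  have hshift : ∀ (k : ℕ) (z : ℝ), g' (k + 1) z =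
      z ^ k / ((Nat.factorial k : ℝ) * (Nat.factorial (n + 1 + k) : ℝ)) := by
    intro k z
    have : n + (k + 1) = n + 1 + k := by ring
    simp only [hg', this, Nat.factorial_succ k, Nat.add_sub_cancel]
    push_cast
    field_simp
  have husum : Summable u := by
    rw [← summable_nat_add_iff 1]
    exact (besselF_summable (n + 1) R).congr fun k => (hshift k R).symm
  have key := hasDerivAt_tsum_of_isPreconnected (𝕜 := ℝ) (F := ℝ)
    (g := fun (k : ℕ) (z : ℝ) => z ^ k / ((Nat.factorial k : ℝ) * (Nat.factorial (n + k) : ℝ)))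
    (g' := g') (u := u) (t := Metric.ball 0 R) (y₀ := y) (y := y) husum Metric.isOpen_ball
    (convex_ball 0 R).isPreconnected
    (fun k z _ => (hasDerivAt_pow k z).div_const _)
    (fun k z hz => by
      have hz' : |z| ≤ R := by simpa using (Metric.mem_ball.1 hz).le
      simp only [hg', hu, norm_div, norm_mul, norm_pow, Real.norm_eq_abs, Nat.abs_cast]
      gcongr)
    (by simp [R]) (besselF_summable n y) (by simp [R])
  have hs : ∑' k, g' k y = besselF (n + 1) y := by
    have hsum : Summable fun k => g' k y := by
      rw [← summable_nat_add_iff 1]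
      exact (besselF_summable (n + 1) y).congr fun k => (hshift k y).symm
    rw [hsum.tsum_eq_zero_add]
    simp only [hshift]
    simp [hg', besselF]
  rw [hs] at key
  exact key

lemma besselF_rec (n : ℕ) (y : ℝ) :
    y * besselF (n + 2) y + (n + 1) * besselF (n + 1) y = besselF n y := by
  have e1 : (n + 1 : ℝ) * besselF (n + 1) y = (n + 1) * (1 / (Nat.factorial (n + 1) : ℝ)) +
      ∑' k : ℕ, (n + 1) * (y ^ (k + 1) /
        ((Nat.factorial (k + 1) : ℝ) * (Nat.factorial (n + 1 + (k + 1)) : ℝ))) := by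
    unfold besselF
    rw [(besselF_summable (n + 1) y).tsum_eq_zero_add, tsum_mul_left]
    simp [mul_add]
  have e0 : besselF n y = 1 / (Nat.factorial n : ℝ) + ∑' k : ℕ, y ^ (k + 1) /
        ((Nat.factorial (k + 1) : ℝ) * (Nat.factorial (n + (k + 1)) : ℝ)) := by
    unfold besselF
    rw [(besselF_summable n y).tsum_eq_zero_add]
    simp
  have e2 : y * besselF (n + 2) y = ∑' k : ℕ, y * (y ^ k /
        ((Nat.factorial k : ℝ) * (Nat.factorial (n + 2 + k) : ℝ))) := by
    unfold besselF
    rw [tsum_mul_left]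
  have s1 := ((summable_nat_add_iff 1).2 (besselF_summable (n + 1) y)).mul_left ((n : ℝ) + 1)
  have s2 := (besselF_summable (n + 2) y).mul_left y
  rw [e1, e0, e2, add_left_comm, ← s2.tsum_add s1]
  congr 1
  · rw [Nat.factorial_succ]; push_cast; field_simp
  · refine tsum_congr fun k => ?_
    have h1 : n + 1 + (k + 1) = n + k + 1 + 1 := by ring
    have h2 : n + 2 + k = n + k + 1 + 1 := by ring
    have h3 : n + (k + 1) = n + k + 1 := by ring
    rw [h1, h2, h3, Nat.factorial_succ (n + k + 1), Nat.factorial_succ k]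
    push_cast
    field_simp
    ring

lemma besselI_eq (n : ℕ) (z : ℝ) : besselI n z = (z / 2) ^ n * besselF n (z ^ 2 / 4) := by
  unfold besselI besselF
  rw [← tsum_mul_left]
  refine tsum_congr fun k => ?_
  rw [pow_add, pow_mul, show (z / 2) ^ 2 = z ^ 2 / 4 by ring]
  ring

lemma besselF_sq_hasDerivAt (m : ℕ) (t : ℝ) : HasDerivAt (fun t => besselF m (t ^ 2 / 4))
    (besselF (m + 1) (t ^ 2 / 4) * (t / 2)) t := by
  have := (besselF_hasDerivAt m (t ^ 2 / 4)).comp t ((hasDerivAt_pow 2 t).div_const 4)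
  refine this.congr_deriv ?_
  push_cast
  ring

/-! ### Comparison with solutions of the Riccati equation -/

/-- Riccati comparison. Here `v` stands for `G - n` with `G` a trial value of `t I_n' / I_n`, and
`t² / 2 * besselF (n+1) / besselF n` is the true value of `t I_n' / I_n - n`. If `v` is a strict
supersolution (`ε = 1`) or subsolution (`ε = -1`) of the Riccati equation with the correct value at
`0`, it lies above, respectively below, the true value. The function `ψ` provides the integrating
factor `t^(2n) exp ψ`. -/
lemma log_deriv_compare (n : ℕ) (ε : ℝ) (v v' ψ : ℝ → ℝ)
    (hv : ∀ t, 0 < t → HasDerivAt v (v' t) t) (hψ : ∀ t, 0 < t → HasDerivAt ψ (v t / t) t)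
    (hvc : ContinuousOn v (Set.Ici 0)) (hψc : ContinuousOn ψ (Set.Ici 0)) (hv0 : v 0 = 0)
    (hric : ∀ t, 0 < t → 0 < ε * (t * v' t + 2 * n * v t + v t ^ 2 - t ^ 2)) (t : ℝ) (ht : 0 < t) :
    ε * (t ^ 2 / 2 * besselF (n + 1) (t ^ 2 / 4)) < ε * (v t * besselF n (t ^ 2 / 4)) := by
  have hF := besselF_sq_hasDerivAt
  set W : ℝ → ℝ := fun t => t ^ (2 * n) * Real.exp (ψ t) *
    (ε * (t ^ 2 / 2 * besselF (n + 1) (t ^ 2 / 4) - v t * besselF n (t ^ 2 / 4))) with hW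
  have hcont : ContinuousOn W (Set.Ici 0) := by
    have hc : ∀ m, ContinuousOn (fun t => besselF m (t ^ 2 / 4)) (Set.Ici 0) :=
      fun m t _ => (hF m t).continuousAt.continuousWithinAt
    have h1 := hc n
    have h2 := hc (n + 1)
    have h3 := Real.continuous_exp.comp_continuousOn hψc
    exact ((by fun_prop : ContinuousOn (fun t : ℝ => t ^ (2 * n)) _).mul h3).mul
      (continuousOn_const.mul (((by fun_prop : ContinuousOn (fun t : ℝ => t ^ 2 / 2) _).mul h2).sub
        (hvc.mul h1)))
  have hderiv : ∀ t, 0 < t → deriv W t < 0 := by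
    intro t ht
    have hd := ((hasDerivAt_pow (2 * n) t).mul (hψ t ht).exp).mul
      ((((((hasDerivAt_id t).pow 2).div_const 2).mul (hF (n + 1) t)).sub
        ((hv t ht).mul (hF n t))).const_mul ε)
    -- After the three-term recurrence eliminates `besselF (n + 2)`, the derivative of `W` is a
    -- positive factor times the Riccati defect of `v`.
    have hval : deriv W t = -(t ^ (2 * n) * Real.exp (ψ t) / t * besselF n (t ^ 2 / 4) *
        (ε * (t * v' t + 2 * n * v t + v t ^ 2 - t ^ 2))) := by
      refine hd.deriv.trans ?_
      have hpow : ((2 * n : ℕ) : ℝ) * t ^ (2 * n - 1) = 2 * n * t ^ (2 * n) / t := by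
        rcases Nat.eq_zero_or_pos n with rfl | hn
        · simp
        · rw [eq_div_iff ht.ne', mul_assoc, ← pow_succ, Nat.sub_add_cancel (by omega)]
          push_cast; ring
      rw [hpow]
      simp only [Pi.mul_apply, Pi.sub_apply, Pi.pow_apply, id]
      rw [← besselF_rec n (t ^ 2 / 4)]
      push_cast
      field_simp
      ring
    rw [hval]
    have := besselF_pos n (y := t ^ 2 / 4) (by positivity)
    have h2 := hric t ht
    have : 0 < t ^ (2 * n) * Real.exp (ψ t) / t * besselF n (t ^ 2 / 4) *
        (ε * (t * v' t + 2 * n * v t + v t ^ 2 - t ^ 2)) := by positivity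
    linarith
  have hanti : StrictAntiOn W (Set.Ici 0) :=
    strictAntiOn_of_deriv_neg (convex_Ici 0) hcont fun t ht => hderiv t (by simpa using ht)
  have h := hanti (Set.mem_Ici.2 le_rfl) (Set.mem_Ici.2 ht.le) ht
  have h0 : W 0 = 0 := by simp [hW, hv0]
  rw [h0] at h
  have h' : ε * (t ^ 2 / 2 * besselF (n + 1) (t ^ 2 / 4) - v t * besselF n (t ^ 2 / 4)) < 0 := by
    by_contra hcon
    have : 0 ≤ W t := mul_nonneg (by positivity) (not_lt.1 hcon)
    linarith
  linarith

/-- Integrated form of `log_deriv_compare`: `exp ψ` is the trial function divided by `tⁿ`. -/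
lemma log_sub_strictAnti (n : ℕ) (ε : ℝ) (v v' ψ : ℝ → ℝ)
    (hv : ∀ t, 0 < t → HasDerivAt v (v' t) t) (hψ : ∀ t, 0 < t → HasDerivAt ψ (v t / t) t)
    (hvc : ContinuousOn v (Set.Ici 0)) (hψc : ContinuousOn ψ (Set.Ici 0)) (hv0 : v 0 = 0)
    (hric : ∀ t, 0 < t → 0 < ε * (t * v' t + 2 * n * v t + v t ^ 2 - t ^ 2)) :
    StrictAntiOn (fun t => ε * (Real.log (besselF n (t ^ 2 / 4)) - ψ t)) (Set.Ici 0) := by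
  have hF := besselF_sq_hasDerivAt
  have hpos : ∀ t : ℝ, 0 < besselF n (t ^ 2 / 4) := fun t => besselF_pos n (by positivity)
  refine strictAntiOn_of_deriv_neg (convex_Ici 0) ?_ fun t ht => ?_
  · refine continuousOn_const.mul (ContinuousOn.sub (fun t _ => ?_) hψc)
    exact ((hF n t).log (hpos t).ne').continuousAt.continuousWithinAt
  · have ht : 0 < t := by simpa using ht
    have hd := (((hF n t).log (hpos t).ne').sub (hψ t ht)).const_mul ε
    refine hd.deriv.trans_lt ?_
    have hc := log_deriv_compare n ε v v' ψ hv hψ hvc hψc hv0 hric t ht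
    have hp := hpos t
    have : ε * (besselF (n + 1) (t ^ 2 / 4) * (t / 2) / besselF n (t ^ 2 / 4) - v t / t) =
      (ε * (t ^ 2 / 2 * besselF (n + 1) (t ^ 2 / 4)) - ε * (v t * besselF n (t ^ 2 / 4))) /
        (t * besselF n (t ^ 2 / 4)) := by
      field_simp
    rw [this]
    exact div_neg_of_neg_of_pos (by linarith) (by positivity)

/-- The comparison with `v = ψ = t` says `t² / 2 * besselF (n+1) < t * besselF n`, that is,
`I_{n+1} < I_n`. -/
lemma besselI_succ_le (n : ℕ) (t : ℝ) (ht : 0 < t) : besselI (n + 1) t ≤ besselI n t := by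
  have h := log_deriv_compare n 1 (fun t => t) (fun _ => 1) (fun t => t)
    (fun t _ => hasDerivAt_id t) (fun t ht => by simpa [ht.ne'] using hasDerivAt_id' t)
    continuousOn_id continuousOn_id rfl
    (fun t ht => by have : (0 : ℝ) ≤ n * t := by positivity
                    nlinarith) t ht
  rw [besselI_eq, besselI_eq, pow_succ, mul_assoc]
  refine mul_le_mul_of_nonneg_left ?_ (by positivity)
  have h' : t * (t / 2 * besselF (n + 1) (t ^ 2 / 4)) ≤ t * besselF n (t ^ 2 / 4) := by
    simp only [one_mul] at h
    linarith
  exact le_of_mul_le_mul_left h' ht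

/-! ### The explicit super- and subsolution -/

/-- The square root `√(n² + t²)`, equal to `n √(1 + x²)` at `t = n x`. -/
noncomputable def debyeS (n : ℕ) (t : ℝ) : ℝ := Real.sqrt ((n : ℝ) ^ 2 + t ^ 2)

lemma debyeS_sq (n : ℕ) (t : ℝ) : debyeS n t ^ 2 = (n : ℝ) ^ 2 + t ^ 2 :=
  Real.sq_sqrt (by positivity)

lemma le_debyeS (n : ℕ) (t : ℝ) : (n : ℝ) ≤ debyeS n t :=
  Real.le_sqrt_of_sq_le (by nlinarith [sq_nonneg t])

lemma lt_debyeS (n : ℕ) {t : ℝ} (ht : 0 < t) : (n : ℝ) < debyeS n t :=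
  Real.lt_sqrt_of_sq_lt (by nlinarith)

lemma debyeS_pos {n : ℕ} (hn : 1 ≤ n) (t : ℝ) : 0 < debyeS n t :=
  lt_of_lt_of_le (by exact_mod_cast hn) (le_debyeS n t)

lemma debyeS_zero (n : ℕ) : debyeS n 0 = n := by simp [debyeS]

lemma debyeS_hasDerivAt {n : ℕ} (hn : 1 ≤ n) (t : ℝ) :
    HasDerivAt (debyeS n) (t / debyeS n t) t := by
  have hs := debyeS_pos hn t
  have := ((hasDerivAt_pow 2 t).const_add ((n : ℝ) ^ 2)).sqrt
    (by rw [← debyeS_sq]; positivity)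
  refine this.congr_deriv ?_
  change _ / (2 * debyeS n t) = _
  push_cast
  field_simp

/-- The supersolution `s - t² / (2 (n² + n + t²))`, shifted by `-n`. -/
noncomputable def superV (n : ℕ) (t : ℝ) : ℝ :=
  debyeS n t - n - t ^ 2 / (2 * ((n : ℝ) ^ 2 + n + t ^ 2))

/-- The primitive of `superV n t / t`; the Debye exponent is `n log t + s - n log (n + s)`. -/
noncomputable def superPsi (n : ℕ) (t : ℝ) : ℝ :=
  debyeS n t - n * Real.log (n + debyeS n t) - Real.log ((n : ℝ) ^ 2 + n + t ^ 2) / 4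

/-- The subsolution `s - t² / (2 s²) - t² / s³`, shifted by `-n`. The first two terms are the leading
Debye approximation; the last one makes the Riccati defect negative, at the cost of the term `1 / s`,
at most `1 / n`, in the primitive `subPsi`. -/
noncomputable def subV (n : ℕ) (t : ℝ) : ℝ :=
  debyeS n t - n - t ^ 2 / (2 * debyeS n t ^ 2) - t ^ 2 / debyeS n t ^ 3

/-- The primitive of `subV n t / t`. -/
noncomputable def subPsi (n : ℕ) (t : ℝ) : ℝ :=
  debyeS n t - n * Real.log (n + debyeS n t) - Real.log (debyeS n t) / 2 + 1 / debyeS n t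

lemma superV_hasDerivAt {n : ℕ} (hn : 1 ≤ n) (t : ℝ) :
    HasDerivAt (superV n) (t / debyeS n t - t / ((n : ℝ) ^ 2 + n + t ^ 2) +
      t ^ 3 / ((n : ℝ) ^ 2 + n + t ^ 2) ^ 2) t := by
  have hn' : (0 : ℝ) < n := by exact_mod_cast hn
  have hq : 0 < (n : ℝ) ^ 2 + n + t ^ 2 := by positivity
  have := ((debyeS_hasDerivAt hn t).sub_const (n : ℝ)).sub ((hasDerivAt_pow 2 t).div
    (((hasDerivAt_pow 2 t).const_add ((n : ℝ) ^ 2 + n)).const_mul 2) (by positivity))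
  refine this.congr_deriv ?_
  have hs := debyeS_pos hn t
  push_cast
  field_simp
  ring

lemma subV_hasDerivAt {n : ℕ} (hn : 1 ≤ n) (t : ℝ) :
    HasDerivAt (subV n) (t / debyeS n t - t / debyeS n t ^ 2 + t ^ 3 / debyeS n t ^ 4
      - 2 * t / debyeS n t ^ 3 + 3 * t ^ 3 / debyeS n t ^ 5) t := by
  have hs := debyeS_pos hn t
  have hd := debyeS_hasDerivAt hn t
  have := ((hd.sub_const (n : ℝ)).sub ((hasDerivAt_pow 2 t).div
    ((hd.pow 2).const_mul 2) (by simp; positivity))).sub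
    ((hasDerivAt_pow 2 t).div (hd.pow 3) (by simp; positivity))
  refine this.congr_deriv ?_
  simp only [Pi.pow_apply]
  push_cast
  field_simp
  ring

/-- Both sides are equal to `t / (n + s)`, because `s² - n² = t²`. -/
lemma debye_deriv_eq {n : ℕ} (hn : 1 ≤ n) {t : ℝ} (ht : 0 < t) :
    t / debyeS n t - n * (t / debyeS n t / (n + debyeS n t)) = (debyeS n t - n) / t := by
  have hs := debyeS_pos hn t
  have hn' : (0 : ℝ) < n := by exact_mod_cast hn
  field_simp
  linear_combination -debyeS n t * debyeS_sq n t

lemma superPsi_hasDerivAt {n : ℕ} (hn : 1 ≤ n) (t : ℝ) :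
    HasDerivAt (superPsi n) (t / debyeS n t - n * (t / debyeS n t / (n + debyeS n t))
      - t / (2 * ((n : ℝ) ^ 2 + n + t ^ 2))) t := by
  have hn' : (0 : ℝ) < n := by exact_mod_cast hn
  have hq : 0 < (n : ℝ) ^ 2 + n + t ^ 2 := by positivity
  have hs := debyeS_pos hn t
  have hd := debyeS_hasDerivAt hn t
  have := (hd.sub (((hd.const_add (n : ℝ)).log (by positivity)).const_mul (n : ℝ))).sub
    ((((hasDerivAt_pow 2 t).const_add ((n : ℝ) ^ 2 + n)).log hq.ne').div_const 4)
  refine this.congr_deriv ?_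
  push_cast
  field_simp
  ring

lemma subPsi_hasDerivAt {n : ℕ} (hn : 1 ≤ n) (t : ℝ) :
    HasDerivAt (subPsi n) (t / debyeS n t - n * (t / debyeS n t / (n + debyeS n t))
      - t / (2 * debyeS n t ^ 2) - t / debyeS n t ^ 3) t := by
  have hn' : (0 : ℝ) < n := by exact_mod_cast hn
  have hs := debyeS_pos hn t
  have hd := debyeS_hasDerivAt hn t
  have := ((hd.sub (((hd.const_add (n : ℝ)).log (by positivity)).const_mul (n : ℝ))).sub
    ((hd.log hs.ne').div_const 2)).add ((hasDerivAt_const t (1 : ℝ)).div hd hs.ne')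
  refine this.congr_deriv ?_
  field_simp
  ring

/-- With `q = s² + n`, the Riccati defect is
`t² (s - n) (s² / 4 + 5 s n / 4 - n) / (s q²)`, and `s > n ≥ 1`. -/
lemma superV_riccati {n : ℕ} (hn : 1 ≤ n) {t : ℝ} (ht : 0 < t) :
    0 < t * (t / debyeS n t - t / ((n : ℝ) ^ 2 + n + t ^ 2) +
      t ^ 3 / ((n : ℝ) ^ 2 + n + t ^ 2) ^ 2) + 2 * n * superV n t + superV n t ^ 2 - t ^ 2 := by
  have hn' : (1 : ℝ) ≤ n := by exact_mod_cast hn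
  have hs := debyeS_pos hn t
  have hlt := lt_debyeS n ht
  have hsq := debyeS_sq n t
  unfold superV
  set s := debyeS n t
  have hq : (n : ℝ) ^ 2 + n + t ^ 2 = s ^ 2 + n := by linarith
  have ht2 : t ^ 2 = s ^ 2 - n ^ 2 := by linarith
  have hq0 : 0 < s ^ 2 + n := by positivity
  have e : t * (t / s - t / (s ^ 2 + n) + t ^ 3 / (s ^ 2 + n) ^ 2) =
      t ^ 2 / s - t ^ 2 / (s ^ 2 + n) + (t ^ 2) ^ 2 / (s ^ 2 + n) ^ 2 := by ring
  have key : t ^ 2 / s - t ^ 2 / (s ^ 2 + n) + (t ^ 2) ^ 2 / (s ^ 2 + n) ^ 2 +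
      2 * n * (s - n - t ^ 2 / (2 * (s ^ 2 + n))) + (s - n - t ^ 2 / (2 * (s ^ 2 + n))) ^ 2 - t ^ 2
      = (s ^ 2 - n ^ 2) * (s - n) * (s ^ 2 / 4 + 5 * s * n / 4 - n) / (s * (s ^ 2 + n) ^ 2) := by
    rw [ht2]
    field_simp
    ring
  rw [hq, e, key]
  have h1 : 0 < s ^ 2 - n ^ 2 := by rw [← ht2]; positivity
  have h2 : 0 < s - n := by linarith
  have h3 : 0 < s ^ 2 / 4 + 5 * s * n / 4 - n := by nlinarith
  positivity

/-- The Riccati defect is `-t² (3 s⁴ + 2 s³ - t² (5 s² / 4 + 4 s + 1)) / s⁶`; since `t < s`, it is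
negative as soon as `7 s² / 4 - 2 s - 1 > 0`, for which `s ≥ 2` suffices. -/
lemma subV_riccati {n : ℕ} (hn : 2 ≤ n) {t : ℝ} (ht : 0 < t) :
    t * (t / debyeS n t - t / debyeS n t ^ 2 + t ^ 3 / debyeS n t ^ 4
      - 2 * t / debyeS n t ^ 3 + 3 * t ^ 3 / debyeS n t ^ 5) + 2 * n * subV n t
      + subV n t ^ 2 - t ^ 2 < 0 := by
  have hn' : (2 : ℝ) ≤ n := by exact_mod_cast hn
  have hs := debyeS_pos (by omega : 1 ≤ n) t
  have hlt := lt_debyeS n ht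
  have hsq := debyeS_sq n t
  unfold subV
  set s := debyeS n t
  have ht2 : t ^ 2 = s ^ 2 - n ^ 2 := by linarith
  have e : t * (t / s - t / s ^ 2 + t ^ 3 / s ^ 4 - 2 * t / s ^ 3 + 3 * t ^ 3 / s ^ 5) =
      t ^ 2 / s - t ^ 2 / s ^ 2 + (t ^ 2) ^ 2 / s ^ 4 - 2 * t ^ 2 / s ^ 3
        + 3 * (t ^ 2) ^ 2 / s ^ 5 := by ring
  have key : t ^ 2 / s - t ^ 2 / s ^ 2 + (t ^ 2) ^ 2 / s ^ 4 - 2 * t ^ 2 / s ^ 3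
        + 3 * (t ^ 2) ^ 2 / s ^ 5 + 2 * n * (s - n - t ^ 2 / (2 * s ^ 2) - t ^ 2 / s ^ 3)
        + (s - n - t ^ 2 / (2 * s ^ 2) - t ^ 2 / s ^ 3) ^ 2 - t ^ 2
      = -((s ^ 2 - n ^ 2) * (3 * s ^ 4 + 2 * s ^ 3
          - (s ^ 2 - n ^ 2) * (5 / 4 * s ^ 2 + 4 * s + 1)) / s ^ 6) := by
    rw [ht2]
    field_simp
    ring
  rw [e, key]
  have h1 : 0 < s ^ 2 - n ^ 2 := by rw [← ht2]; positivity
  have h3 : 0 < 3 * s ^ 4 + 2 * s ^ 3 - (s ^ 2 - n ^ 2) * (5 / 4 * s ^ 2 + 4 * s + 1) := by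
    have a1 : (s ^ 2 - n ^ 2) * (5 / 4 * s ^ 2 + 4 * s + 1) ≤
        s ^ 2 * (5 / 4 * s ^ 2 + 4 * s + 1) := by
      gcongr
      nlinarith
    have a2 : 0 < s ^ 2 * (7 / 4 * s ^ 2 - 2 * s - 1) := by
      have : 0 < 7 / 4 * s ^ 2 - 2 * s - 1 := by nlinarith
      positivity
    nlinarith
  have : 0 < (s ^ 2 - n ^ 2) * (3 * s ^ 4 + 2 * s ^ 3
          - (s ^ 2 - n ^ 2) * (5 / 4 * s ^ 2 + 4 * s + 1)) / s ^ 6 := by positivity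
  linarith

/-! ### Behaviour at infinity of the explicit exponents -/

lemma debyeS_sub_tendsto (n : ℕ) : Tendsto (fun t => debyeS n t - t) atTop (𝓝 0) := by
  refine squeeze_zero' (g := fun t : ℝ => (n : ℝ) ^ 2 / t) ?_ ?_
    (tendsto_const_nhds.div_atTop tendsto_id)
  · filter_upwards [eventually_gt_atTop 0] with t ht
    have := debyeS_sq n t
    have h0 : 0 ≤ debyeS n t := Real.sqrt_nonneg _
    nlinarith [sq_nonneg (n : ℝ)]
  · filter_upwards [eventually_gt_atTop 0] with t ht
    have := debyeS_sq n t
    have h0 : 0 ≤ debyeS n t := Real.sqrt_nonneg _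
    rw [le_div_iff₀ ht]
    nlinarith [sq_nonneg (debyeS n t - t)]

lemma log_sub_log_tendsto {g : ℝ → ℝ} {c : ℝ} (hg : Tendsto (fun t => g t - t) atTop (𝓝 c)) :
    Tendsto (fun t => Real.log (g t) - Real.log t) atTop (𝓝 0) := by
  have h1 : Tendsto (fun t => 1 + (g t - t) / t) atTop (𝓝 (1 + 0)) :=
    tendsto_const_nhds.add (hg.div_atTop tendsto_id)
  rw [add_zero] at h1
  have h2 := (Real.continuousAt_log one_ne_zero).tendsto.comp h1
  rw [Real.log_one] at h2
  have hgt : Tendsto g atTop atTop := by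
    have := hg.add_atTop tendsto_id
    exact this.congr fun t => by simp
  refine h2.congr' ?_
  filter_upwards [eventually_gt_atTop 0, hgt.eventually_gt_atTop 0] with t ht hgt
  rw [← Real.log_div hgt.ne' ht.ne']
  simp only [Function.comp]
  congr 1
  field_simp
  ring

lemma debye_tendsto (n : ℕ) :
    Tendsto (fun t => n * Real.log t + (debyeS n t - n * Real.log (n + debyeS n t)) - t)
      atTop (𝓝 0) := by
  have h1 := debyeS_sub_tendsto n
  have h2 : Tendsto (fun t => ((n : ℝ) + debyeS n t) - t) atTop (𝓝 (n + 0)) :=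
    (h1.const_add (n : ℝ)).congr fun t => by ring
  have h3 := h1.sub ((log_sub_log_tendsto h2).const_mul (n : ℝ))
  simp only [mul_zero, sub_zero] at h3
  exact h3.congr fun t => by ring

lemma superPsi_tendsto (n : ℕ) :
    Tendsto (fun t => n * Real.log t + superPsi n t - (t - Real.log t / 2)) atTop (𝓝 0) := by
  have hq : Tendsto (fun t => Real.sqrt ((n : ℝ) ^ 2 + n + t ^ 2) - t) atTop (𝓝 0) := by
    refine squeeze_zero' (g := fun t : ℝ => ((n : ℝ) ^ 2 + n) / t) ?_ ?_
      (tendsto_const_nhds.div_atTop tendsto_id)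
    · filter_upwards [eventually_gt_atTop 0] with t ht
      have : t ≤ Real.sqrt ((n : ℝ) ^ 2 + n + t ^ 2) := Real.le_sqrt_of_sq_le (by
        have : (0 : ℝ) ≤ (n : ℝ) ^ 2 + n := by positivity
        linarith)
      linarith
    · filter_upwards [eventually_gt_atTop 0] with t ht
      have := Real.sq_sqrt (by positivity : 0 ≤ (n : ℝ) ^ 2 + n + t ^ 2)
      rw [le_div_iff₀ ht]
      nlinarith [sq_nonneg (Real.sqrt ((n : ℝ) ^ 2 + n + t ^ 2) - t)]
  have h := (debye_tendsto n).sub ((log_sub_log_tendsto hq).const_mul (1 / 2 : ℝ))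
  simp only [mul_zero, sub_zero] at h
  refine h.congr fun t => ?_
  rw [Real.log_sqrt (by positivity)]
  unfold superPsi
  ring

lemma subPsi_tendsto (n : ℕ) :
    Tendsto (fun t => n * Real.log t + subPsi n t - (t - Real.log t / 2)) atTop (𝓝 0) := by
  have hs := debyeS_sub_tendsto n
  have hinf : Tendsto (debyeS n) atTop atTop :=
    (hs.add_atTop tendsto_id).congr fun t => by simp
  have h := ((debye_tendsto n).sub ((log_sub_log_tendsto hs).const_mul (1 / 2 : ℝ))).add
    (tendsto_const_nhds (x := (1 : ℝ)).div_atTop hinf)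
  simp only [mul_zero, sub_zero, add_zero] at h
  refine h.congr fun t => ?_
  unfold subPsi
  ring

/-! ### The remainder in Stirling's formula -/

/-- The remainder `log n! - n (log n - 1) - log (2πn) / 2` in Stirling's formula. -/
noncomputable def robbinsR (n : ℕ) : ℝ :=
  Real.log (Nat.factorial n) - n * (Real.log n - 1) - 1 / 2 * Real.log (2 * Real.pi * n)

lemma robbinsR_eq {n : ℕ} (hn : 1 ≤ n) :
    robbinsR n = Real.log (Stirling.stirlingSeq n) - Real.log (Real.sqrt Real.pi) := by
  have hn' : (0 : ℝ) < n := by exact_mod_cast hn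
  rw [Stirling.log_stirlingSeq_formula, robbinsR, Real.log_sqrt Real.pi_pos.le,
    Real.log_div hn'.ne' (Real.exp_pos 1).ne', Real.log_exp,
    show 2 * Real.pi * n = Real.pi * (2 * n) by ring,
    Real.log_mul Real.pi_pos.ne' (by positivity)]
  ring

lemma robbinsR_tendsto : Tendsto robbinsR atTop (𝓝 0) := by
  have h := ((Real.continuousAt_log (Real.sqrt_pos.2 Real.pi_pos).ne').tendsto.comp
    Stirling.tendsto_stirlingSeq_sqrt_pi).sub_const (Real.log (Real.sqrt Real.pi))
  rw [sub_self] at h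
  refine h.congr' ?_
  filter_upwards [eventually_ge_atTop 1] with n hn
  exact (robbinsR_eq hn).symm

/-- A weak form of Robbins' lower bound: the first term of the series for `r_m - r_{m+1}` already
dominates `1 / (12(m+1)) - 1 / (12(m+2))`, so `r_m - 1 / (12(m+1))` decreases to its limit `0`. -/
lemma robbinsR_ge {n : ℕ} (hn : 1 ≤ n) : 1 / (12 * ((n : ℝ) + 1)) ≤ robbinsR n := by
  have hstep : ∀ m : ℕ, robbinsR (m + 2) - 1 / (12 * (((m + 2 : ℕ) : ℝ) + 1)) ≤
      robbinsR (m + 1) - 1 / (12 * (((m + 1 : ℕ) : ℝ) + 1)) := by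
    intro m
    have h := Stirling.log_stirlingSeq_sdiff_hasSum m
    have h1 := le_hasSum h 0 (fun k _ => by positivity)
    rw [robbinsR_eq (by omega), robbinsR_eq (by omega)]
    have h2 : 1 / (12 * (((m + 1 : ℕ) : ℝ) + 1)) - 1 / (12 * (((m + 2 : ℕ) : ℝ) + 1)) ≤
        (1 : ℝ) / (2 * ((0 + 1 : ℕ) : ℝ) + 1) * ((1 / (2 * ((m + 1 : ℕ) : ℝ) + 1)) ^ 2) ^ (0 + 1) := by
      simp only [zero_add]
      push_cast
      have e : 1 / (12 * (((m : ℝ) + 1) + 1)) - 1 / (12 * (((m : ℝ) + 2) + 1)) =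
        1 / (12 * (m + 2) * (m + 3)) := by field_simp; ring
      have e2 : (1 : ℝ) / (2 * 1 + 1) * ((1 / (2 * ((m : ℝ) + 1) + 1)) ^ 2) ^ 1 =
        1 / (3 * (2 * m + 3) ^ 2) := by
        rw [show 2 * ((m : ℝ) + 1) + 1 = 2 * m + 3 by ring]; field_simp; norm_num
      rw [e, e2]
      refine one_div_le_one_div_of_le (by positivity) ?_
      nlinarith [(Nat.cast_nonneg m : (0 : ℝ) ≤ m)]
    linarith
  have hanti : Antitone fun m : ℕ => robbinsR (m + 1) - 1 / (12 * (((m + 1 : ℕ) : ℝ) + 1)) :=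
    antitone_nat_of_succ_le hstep
  have hlim : Tendsto (fun m : ℕ => robbinsR (m + 1) - 1 / (12 * (((m + 1 : ℕ) : ℝ) + 1)))
      atTop (𝓝 0) := by
    have h1 := (tendsto_add_atTop_iff_nat 1).2 robbinsR_tendsto
    have h2 : Tendsto (fun m : ℕ => 1 / (12 * (((m + 1 : ℕ) : ℝ) + 1))) atTop (𝓝 0) := by
      refine (tendsto_const_nhds (x := (1 : ℝ))).div_atTop ?_
      refine Tendsto.const_mul_atTop (by norm_num) (tendsto_atTop_add_const_right _ _ ?_)
      exact tendsto_natCast_atTop_atTop.comp (tendsto_add_atTop_nat 1)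
    simpa using h1.sub h2
  obtain ⟨m, rfl⟩ := Nat.exists_eq_add_of_le' hn
  have := hanti.le_of_tendsto hlim m
  linarith

/-! ### The gap between `log I_n` and the two comparison functions -/

/-- `log I_n(t) - (n log t + superPsi n t) + log (2π) / 2`, written so as to make sense at `t = 0`. -/
noncomputable def superGap (n : ℕ) (t : ℝ) : ℝ :=
  Real.log (besselF n (t ^ 2 / 4)) - superPsi n t - n * Real.log 2 + Real.log (2 * Real.pi) / 2

/-- `log I_n(t) - (n log t + subPsi n t) + log (2π) / 2`, written so as to make sense at `t = 0`. -/
noncomputable def subGap (n : ℕ) (t : ℝ) : ℝ :=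
  Real.log (besselF n (t ^ 2 / 4)) - subPsi n t - n * Real.log 2 + Real.log (2 * Real.pi) / 2

lemma superGap_strictAnti {n : ℕ} (hn : 1 ≤ n) : StrictAntiOn (superGap n) (Set.Ici 0) := by
  have h := log_sub_strictAnti n 1 (superV n) _ (superPsi n)
    (fun t _ => superV_hasDerivAt hn t)
    (fun t ht => (superPsi_hasDerivAt hn t).congr_deriv (by
      rw [debye_deriv_eq hn ht, superV]
      field_simp))
    (fun t _ => (superV_hasDerivAt hn t).continuousAt.continuousWithinAt)
    (fun t _ => (superPsi_hasDerivAt hn t).continuousAt.continuousWithinAt)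
    (by simp [superV, debyeS_zero])
    (fun t ht => by rw [one_mul]; exact superV_riccati hn ht)
  intro a ha b hb hab
  have := h ha hb hab
  simp only [one_mul] at this
  unfold superGap
  linarith

lemma subGap_strictMono {n : ℕ} (hn : 2 ≤ n) : StrictMonoOn (subGap n) (Set.Ici 0) := by
  have hn1 : 1 ≤ n := by omega
  have h := log_sub_strictAnti n (-1) (subV n) _ (subPsi n)
    (fun t _ => subV_hasDerivAt hn1 t)
    (fun t ht => (subPsi_hasDerivAt hn1 t).congr_deriv (by
      have hs := debyeS_pos hn1 t
      rw [debye_deriv_eq hn1 ht, subV]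
      field_simp))
    (fun t _ => (subV_hasDerivAt hn1 t).continuousAt.continuousWithinAt)
    (fun t _ => (subPsi_hasDerivAt hn1 t).continuousAt.continuousWithinAt)
    (by simp [subV, debyeS_zero])
    (fun t ht => by have := subV_riccati hn ht; linarith)
  intro a ha b hb hab
  have := h ha hb hab
  simp only [neg_one_mul] at this
  unfold subGap
  linarith

lemma superGap_zero {n : ℕ} (hn : 1 ≤ n) :
    superGap n 0 = Real.log (1 + 1 / (n : ℝ)) / 4 - robbinsR n := by
  have hn' : (0 : ℝ) < n := by exact_mod_cast hn
  have hf : (0 : ℝ) < Nat.factorial n := by positivity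
  have e : (n : ℝ) ^ 2 + n + 0 ^ 2 = n ^ 2 * (1 + 1 / n) := by field_simp; ring
  unfold superGap superPsi robbinsR
  rw [debyeS_zero, e, Real.log_mul (by positivity) (by positivity), Real.log_pow,
    show (0 : ℝ) ^ 2 / 4 = 0 by norm_num, besselF_zero, ← two_mul,
    Real.log_mul two_ne_zero hn'.ne', Real.log_mul (by positivity : 2 * Real.pi ≠ 0) hn'.ne',
    one_div (Nat.factorial n : ℝ), Real.log_inv]
  push_cast
  ring

lemma subGap_zero {n : ℕ} (hn : 1 ≤ n) : subGap n 0 = -robbinsR n - 1 / n := by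
  have hn' : (0 : ℝ) < n := by exact_mod_cast hn
  have hf : (0 : ℝ) < Nat.factorial n := by positivity
  unfold subGap subPsi robbinsR
  rw [debyeS_zero, show (0 : ℝ) ^ 2 / 4 = 0 by norm_num, besselF_zero, ← two_mul,
    Real.log_mul two_ne_zero hn'.ne', Real.log_mul (by positivity : 2 * Real.pi ≠ 0) hn'.ne',
    one_div (Nat.factorial n : ℝ), Real.log_inv]
  ring

lemma log_besselI {n : ℕ} {t : ℝ} (ht : 0 < t) :
    Real.log (besselI n t) =
      n * Real.log t - n * Real.log 2 + Real.log (besselF n (t ^ 2 / 4)) := by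
  have := besselF_pos n (y := t ^ 2 / 4) (by positivity)
  rw [besselI_eq, Real.log_mul (by positivity) this.ne', Real.log_pow,
    Real.log_div ht.ne' two_ne_zero]
  ring

/-- At a large argument `T`, `superGap n T ≥ subGap N T + o(1)` because `I_n ≥ I_N` and both exponents
are `T - log T / 2 + o(1)`; monotonicity of the two gaps then moves the bound to `t` and `0`. -/
lemma superGap_ge {n N : ℕ} (hn : 1 ≤ n) (hN : 2 ≤ N) (hnN : n ≤ N) {t : ℝ} (ht : 0 < t) :
    subGap N 0 ≤ superGap n t := by
  have hlim := (subPsi_tendsto N).sub (superPsi_tendsto n)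
  have hlim' := hlim.const_add (subGap N 0)
  simp only [sub_zero, add_zero] at hlim'
  refine le_of_tendsto hlim' ?_
  filter_upwards [eventually_gt_atTop t] with T hT
  have hT0 : 0 < T := ht.trans hT
  have h1 : superGap n T < superGap n t :=
    superGap_strictAnti hn (Set.mem_Ici.2 ht.le) (Set.mem_Ici.2 hT0.le) hT
  have h2 : subGap N 0 < subGap N T :=
    subGap_strictMono hN (Set.mem_Ici.2 le_rfl) (Set.mem_Ici.2 hT0.le) hT0
  have h3 : besselI N T ≤ besselI n T :=
    antitone_nat_of_succ_le (f := fun m => besselI m T) (fun m => besselI_succ_le m T hT0) hnN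
  have h4 : 0 < besselI N T := by
    rw [besselI_eq]
    exact mul_pos (by positivity) (besselF_pos N (by positivity))
  have h5 := Real.log_le_log h4 h3
  rw [log_besselI hT0, log_besselI hT0] at h5
  unfold superGap at h1 ⊢
  unfold subGap at h2 ⊢
  linarith

lemma superGap_pos {n : ℕ} (hn : 1 ≤ n) {t : ℝ} (ht : 0 < t) : 0 < superGap n t := by
  -- The limit over `N` only gives a weak inequality, so it is taken at a point beyond `t`.
  have hnonneg : 0 ≤ superGap n (t + 1) := by
    have hlim : Tendsto (fun N : ℕ => -robbinsR N - 1 / (N : ℝ)) atTop (𝓝 0) := by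
      simpa using robbinsR_tendsto.neg.sub tendsto_one_div_atTop_nhds_zero_nat
    refine le_of_tendsto hlim ?_
    filter_upwards [eventually_ge_atTop 2, eventually_ge_atTop n] with N hN hnN
    rw [← subGap_zero (by omega)]
    exact superGap_ge hn hN hnN (by linarith)
  have := superGap_strictAnti hn (Set.mem_Ici.2 ht.le) (Set.mem_Ici.2 (by linarith))
    (lt_add_one t)
  linarith

lemma superGap_zero_le {n : ℕ} (hn : 1 ≤ n) : superGap n 0 ≤ 1 / (6 * (n : ℝ)) := by
  have hn' : (1 : ℝ) ≤ n := by exact_mod_cast hn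
  rw [superGap_zero hn]
  have h1 := robbinsR_ge hn
  -- This is `log y ≤ sinh (log y) = (y - 1/y) / 2` at `y = 1 + 1/n`.
  have h2 : Real.log (1 + 1 / (n : ℝ)) ≤ 1 / 2 * (1 / n + 1 / (n + 1)) := by
    have hy : 0 < 1 + 1 / (n : ℝ) := by positivity
    have h := Real.self_le_sinh_iff.2 (Real.log_nonneg (by simp : 1 ≤ 1 + 1 / (n : ℝ)))
    rw [Real.sinh_log hy] at h
    refine h.trans_eq ?_
    field_simp
    ring
  have h3 : 1 / 2 * (1 / (n : ℝ) + 1 / (n + 1)) / 4 - 1 / (12 * ((n : ℝ) + 1)) ≤ 1 / (6 * n) := by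
    have e : 1 / 2 * (1 / (n : ℝ) + 1 / (n + 1)) / 4 - 1 / (12 * ((n : ℝ) + 1)) - 1 / (6 * n)
      = - (1 / (24 * n * (n + 1))) := by
      field_simp
      ring
    have : 0 < 1 / (24 * (n : ℝ) * (n + 1)) := by positivity
    linarith
  linarith

theorem besselI_debye_bounds (n : ℕ) (hn : 1 ≤ n) (x : ℝ) (hx : 0 < x) :
    Real.log (besselI n ((n : ℝ) * x))
        - (n : ℝ) * (Real.sqrt (1 + x ^ 2) + Real.log (x / (1 + Real.sqrt (1 + x ^ 2))))
        + (1 / 4) * Real.log (1 + 1 / (n : ℝ) + x ^ 2)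
        + (1 / 2) * Real.log (2 * Real.pi * n)
      ∈ Set.Ioo (0 : ℝ) (1 / (6 * (n : ℝ))) := by
  have hn' : (0 : ℝ) < n := by exact_mod_cast hn
  have ht : 0 < (n : ℝ) * x := by positivity
  have hS : debyeS n (n * x) = n * Real.sqrt (1 + x ^ 2) := by
    rw [debyeS, show (n : ℝ) ^ 2 + (n * x) ^ 2 = n ^ 2 * (1 + x ^ 2) by ring,
      Real.sqrt_mul (by positivity), Real.sqrt_sq hn'.le]
  have hS0 : 0 ≤ Real.sqrt (1 + x ^ 2) := Real.sqrt_nonneg _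
  have e : Real.log (besselI n ((n : ℝ) * x))
        - (n : ℝ) * (Real.sqrt (1 + x ^ 2) + Real.log (x / (1 + Real.sqrt (1 + x ^ 2))))
        + (1 / 4) * Real.log (1 + 1 / (n : ℝ) + x ^ 2)
        + (1 / 2) * Real.log (2 * Real.pi * n) = superGap n (n * x) := by
    rw [log_besselI ht, superGap, superPsi, hS,
      show (n : ℝ) + n * Real.sqrt (1 + x ^ 2) = n * (1 + Real.sqrt (1 + x ^ 2)) by ring,
      show (n : ℝ) ^ 2 + n + (n * x) ^ 2 = n ^ 2 * (1 + 1 / n + x ^ 2) by field_simp,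
      Real.log_mul hn'.ne' hx.ne', Real.log_mul hn'.ne' (by positivity),
      Real.log_mul (by positivity : (n : ℝ) ^ 2 ≠ 0) (by positivity), Real.log_pow,
      Real.log_mul (by positivity : 2 * Real.pi ≠ 0) hn'.ne',
      Real.log_div hx.ne' (by positivity)]
    push_cast
    ring
  rw [e]
  refine ⟨superGap_pos hn ht, ?_⟩
  have := superGap_strictAnti hn (Set.mem_Ici.2 le_rfl) (Set.mem_Ici.2 ht.le) ht
  exact this.trans_le (superGap_zero_le hn)
end
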